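/- Let G1 be a finite simple graph with maximum degree at most 3, let u and v be adjacent vertices of G1 both of degree 3, and suppose lir(^2G1) ≤ 2. Fix an integer ℓ ≥ 5 and let G2 be the graph obtained from G1 by deleting the edge uv and adding ℓ − 1 new vertices x_1, …, x_{ℓ−1} together with the edges u x_1, x_1 x_2, …, x_{ℓ−2} x_{ℓ−1}, x_{ℓ−1} v (i.e., replacing the edge uv by a path of length ℓ). Then lir(^2G2) ≤ 2. -/

import Mathlib

open scoped Classical

/-- The red degree of a vertex `x`: the sum of the red multiplicities `r e`
over all edges `e` of `G` incident with `x`. -/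
noncomputable def redDeg {V : Type*} [Fintype V] [DecidableEq V]
    (G : SimpleGraph V) (r : Sym2 V → ℕ) (x : V) : ℕ :=
  ∑ e ∈ G.edgeFinset.filter (fun e => x ∈ e), r e

/-- The blue degree of a vertex `x`: the sum of `2 - r e` over all edges `e`
of `G` incident with `x`. -/
noncomputable def blueDeg {V : Type*} [Fintype V] [DecidableEq V]
    (G : SimpleGraph V) (r : Sym2 V → ℕ) (x : V) : ℕ :=
  ∑ e ∈ G.edgeFinset.filter (fun e => x ∈ e), (2 - r e)

/-- `r : E(G) → {0,1,2}` encodes a locally irregular 2-edge-coloring of `²G`: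
every edge gets a red multiplicity at most 2, and for every edge `uv`, if
`r s(u,v) ≥ 1` the red degrees of `u` and `v` differ, and if `r s(u,v) ≤ 1`
the blue degrees of `u` and `v` differ. -/
def IsLIR2 {V : Type*} [Fintype V] [DecidableEq V]
    (G : SimpleGraph V) (r : Sym2 V → ℕ) : Prop :=
  (∀ e ∈ G.edgeSet, r e ≤ 2) ∧
  ∀ u v : V, G.Adj u v →
    (1 ≤ r s(u, v) → redDeg G r u ≠ redDeg G r v) ∧
    (r s(u, v) ≤ 1 → blueDeg G r u ≠ blueDeg G r v)

/-- `lir(²G) ≤ 2`: there is a locally irregular 2-edge-coloring of `²G`. -/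
def LIRtwoLE2 {V : Type*} [Fintype V] [DecidableEq V] (G : SimpleGraph V) : Prop :=
  ∃ r : Sym2 V → ℕ, IsLIR2 G r

/-!
Write `H` for `G₁` without the edge `uv`; then `G₂` is `H` with an ear attached at `u` and `v`. Keep
the given multiplicities on `H` and put multiplicities `a₀, …, aₙ` on the ear. Every edge contributes
equally to the degrees of both its ends, so irregularity inside the ear only says `aᵢ ≠ aᵢ₊₂`, and at
the two ends it only compares `a₁` and `aₙ₋₁` with the degrees of `u` and `v` in `H`. If `a₀` and `aₙ`
both equal the multiplicity of `uv`, no degree of an old vertex changes.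

Since `n ≥ 4`, any values at the ends with `a₁ ≠ aₙ₋₁` extend to the whole ear. As the red and blue
degrees at a vertex have the same parity, such values always exist, except possibly when an endpoint
of `uv` is a leaf of `G₁`; but then the ear edge at that leaf need not copy `uv`, because no edge of
`H` sees the degree of the leaf.
-/

section Degrees

variable {V : Type*} [Fintype V] [DecidableEq V] (G : SimpleGraph V) (r : Sym2 V → ℕ) (x : V)

lemma blueDeg_eq_redDeg_two_sub : blueDeg G r x = redDeg G (fun e ↦ 2 - r e) x := rfl

lemma redDeg_eq_sum : redDeg G r x = ∑ y, if G.Adj x y then r s(x, y) else 0 := by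
  have hinj : Set.InjOn (fun y ↦ s(x, y)) (Finset.univ.filter (G.Adj x)) :=
    fun _ _ _ _ h ↦ Sym2.congr_right.1 h
  rw [← Finset.sum_filter, ← Finset.sum_image (f := r) hinj, redDeg]
  congr 1
  ext e
  induction e with | _ p q
  simp only [Finset.mem_filter, SimpleGraph.mem_edgeFinset, SimpleGraph.mem_edgeSet,
    Sym2.mem_iff, Finset.mem_image, Finset.mem_univ, true_and]
  constructor
  · rintro ⟨h, rfl | rfl⟩
    exacts [⟨q, h, rfl⟩, ⟨p, h.symm, Sym2.eq_swap⟩]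
  · rintro ⟨y, h, hy⟩
    rcases Sym2.eq_iff.1 hy with ⟨rfl, rfl⟩ | ⟨rfl, rfl⟩
    exacts [⟨h, .inl rfl⟩, ⟨h.symm, .inr rfl⟩]

variable {G r} in
lemma redDeg_add_blueDeg [DecidableRel G.Adj] (hr : ∀ e ∈ G.edgeSet, r e ≤ 2) :
    redDeg G r x + blueDeg G r x = 2 * G.degree x := by
  have h_two : ∀ e ∈ G.incidenceFinset x, r e + (2 - r e) = 2 := fun e he ↦
    Nat.add_sub_cancel' (hr e ((G.mem_incidenceFinset x e).1 he).1)
  rw [redDeg, blueDeg, ← Finset.sum_add_distrib, mul_comm, ← G.card_incidenceFinset_eq_degree,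
    ← Finset.sum_const_nat h_two, G.incidenceFinset_eq_filter]
  congr!

variable {G} in
lemma redDeg_eq_redDeg_deleteEdges_add {e : Sym2 V} (he : e ∈ G.edgeSet) :
    redDeg G r x = redDeg (G.deleteEdges {e}) r x + if x ∈ e then r e else 0 := by
  have h_edges : G.edgeFinset = insert e (G.deleteEdges {e}).edgeFinset := by
    ext f
    by_cases hf : f = e <;> simp [hf, he]
  rw [redDeg, redDeg, h_edges, Finset.filter_insert]
  split_ifs
  · rw [Finset.sum_insert (by simp), add_comm]
    congr!
  · rw [add_zero]
    congr!

end Degrees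

section Irregularity

/-- Local irregularity of the coloring `r` of `²G` at a single pair `x`, `y`: the condition that
`IsLIR2` imposes on every edge. -/
def IsIrregularAt {V : Type*} [Fintype V] [DecidableEq V] (G : SimpleGraph V) (r : Sym2 V → ℕ)
    (x y : V) : Prop :=
  (1 ≤ r s(x, y) → redDeg G r x ≠ redDeg G r y) ∧
    (r s(x, y) ≤ 1 → blueDeg G r x ≠ blueDeg G r y)

lemma IsIrregularAt.symm {V : Type*} [Fintype V] [DecidableEq V] {G : SimpleGraph V}
    {r : Sym2 V → ℕ} {x y : V} (h : IsIrregularAt G r x y) : IsIrregularAt G r y x := by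
  rw [IsIrregularAt, Sym2.eq_swap]
  exact ⟨fun hr ↦ (h.1 hr).symm, fun hb ↦ (h.2 hb).symm⟩

/-- Local irregularity at the first edge of an ear. Here `s` and `p` are the red multiplicities of
the first and second edge of the ear, and `R`, `B` are the red and blue degrees of its endpoint
before the ear is attached; the contribution of the first edge cancels. -/
def IsIrregularEnd (R B s p : ℕ) : Prop :=
  (1 ≤ s → R ≠ p) ∧ (s ≤ 1 → B ≠ 2 - p)

end Irregularity

section Multiplicities

lemma exists_le_two_ne_ne (k l : ℕ) : ∃ m ≤ 2, m ≠ k ∧ m ≠ l := by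
  by_contra! h
  have h0 := h 0
  have h1 := h 1
  have h2 := h 2
  omega

lemma exists_seq_ne_add_two (n : ℕ) {s p q t : ℕ} (hs : s ≤ 2) (hp : p ≤ 2) (hq : q ≤ 2)
    (ht : t ≤ 2) (hpq : p ≠ q) :
    ∃ a : ℕ → ℕ, a 0 = s ∧ a 1 = p ∧ a (n + 3) = q ∧ a (n + 4) = t ∧ (∀ i, a i ≤ 2) ∧
      ∀ i, i + 2 ≤ n + 4 → a i ≠ a (i + 2) := by
  induction n generalizing s p with
  | zero =>
    obtain ⟨m, hm, hms, hmt⟩ := exists_le_two_ne_ne s t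
    refine ⟨fun | 0 => s | 1 => p | 2 => m | 3 => q | _ => t, rfl, rfl, rfl, rfl, ?_, ?_⟩
    · rintro (_ | _ | _ | _ | _) <;> assumption
    · intro i hi
      have : i ≤ 2 := by omega
      interval_cases i
      exacts [hms.symm, hpq, hmt]
  | succ n ih =>
    obtain ⟨m, hm, hms, hmq⟩ := exists_le_two_ne_ne s q
    obtain ⟨a, h0, h1, hq', ht', hle, hne⟩ := ih hp hm hmq
    refine ⟨fun | 0 => s | i + 1 => a i, rfl, h0, hq', ht', ?_, ?_⟩
    · rintro (_ | i)
      exacts [hs, hle i]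
    · rintro (_ | i) hi
      · exact fun h ↦ hms (h1.symm.trans h.symm)
      · exact hne i (by omega)

lemma isIrregularEnd_one_one {R B d : ℕ} (h : R + B = 2 * d) (hR : Even R) :
    IsIrregularEnd R B 1 1 := by
  obtain ⟨k, rfl⟩ := hR
  exact ⟨by omega, by omega⟩

lemma exists_isIrregularEnd_ne {s R B d : ℕ} (hs : s ≤ 2) (h : R + B = 2 * d)
    (hsR : s ≠ 1 ∨ Odd R) (k : ℕ) : ∃ p ≤ 2, p ≠ k ∧ IsIrregularEnd R B s p := by
  obtain rfl | rfl | rfl : s = 0 ∨ s = 1 ∨ s = 2 := by omega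
  · obtain ⟨p, hp, hpk, hpB⟩ := exists_le_two_ne_ne k (2 - B)
    exact ⟨p, hp, hpk, by omega, by omega⟩
  · obtain ⟨p, hp, hpk, hp1⟩ := exists_le_two_ne_ne k 1
    obtain ⟨m, rfl⟩ := hsR.resolve_left (by simp)
    exact ⟨p, hp, hpk, by omega, by omega⟩
  · obtain ⟨p, hp, hpk, hpR⟩ := exists_le_two_ne_ne k R
    exact ⟨p, hp, hpk, by omega, by omega⟩

lemma exists_isIrregularEnd {s R B d : ℕ} (hs : s ≤ 2) (h : R + B = 2 * d) :
    ∃ p ≤ 2, IsIrregularEnd R B s p := by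
  by_cases hsR : s ≠ 1 ∨ Odd R
  · obtain ⟨p, hp, -, hend⟩ := exists_isIrregularEnd_ne hs h hsR 0
    exact ⟨p, hp, hend⟩
  · obtain ⟨rfl, hR⟩ : s = 1 ∧ Even R := by simpa using hsR
    exact ⟨1, by simp, isIrregularEnd_one_one h hR⟩

lemma exists_isIrregularEnd_ne_one {R B d : ℕ} (h : R + B = 2 * d) (hRB : R ≠ 2 ∨ B ≠ 2) :
    ∃ s p, s ≤ 2 ∧ p ≤ 2 ∧ p ≠ 1 ∧ (s = 1 ∨ d = 0) ∧ IsIrregularEnd R B s p := by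
  by_cases hd : d = 0
  · exact ⟨2, 2, le_rfl, le_rfl, by simp, .inr hd, by omega, by omega⟩
  · by_cases h0 : R ≠ 0 ∧ B ≠ 2
    · exact ⟨1, 0, by simp, by simp, by simp, .inl rfl, by omega, by omega⟩
    · exact ⟨1, 2, by simp, by simp, by simp, .inl rfl, by omega, by omega⟩

lemma exists_isIrregularEnd_pair {c R B d R' B' d' : ℕ} (hc : c ≤ 2) (h : R + B = 2 * d)
    (h' : R' + B' = 2 * d') (hne : R ≠ R' ∨ B ≠ B') :
    ∃ s p q t, s ≤ 2 ∧ p ≤ 2 ∧ q ≤ 2 ∧ t ≤ 2 ∧ p ≠ q ∧ (s = c ∨ d = 0) ∧ (t = c ∨ d' = 0) ∧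
      IsIrregularEnd R B s p ∧ IsIrregularEnd R' B' t q := by
  by_cases hu : c ≠ 1 ∨ Odd R
  · obtain ⟨q, hq, hv_end⟩ := exists_isIrregularEnd hc h'
    obtain ⟨p, hp, hpq, hu_end⟩ := exists_isIrregularEnd_ne hc h hu q
    exact ⟨c, p, q, c, hc, hp, hq, hc, hpq, .inl rfl, .inl rfl, hu_end, hv_end⟩
  by_cases hv : c ≠ 1 ∨ Odd R'
  · obtain ⟨p, hp, hu_end⟩ := exists_isIrregularEnd hc h
    obtain ⟨q, hq, hqp, hv_end⟩ := exists_isIrregularEnd_ne hc h' hv p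
    exact ⟨c, p, q, c, hc, hp, hq, hc, hqp.symm, .inl rfl, .inl rfl, hu_end, hv_end⟩
  obtain ⟨rfl, hR⟩ : c = 1 ∧ Even R := by simpa using hu
  have hR' : Even R' := by simpa using hv
  -- Both ends accept `1` here; as they differ, one of them is not `(2, 2)` and can avoid `1`.
  by_cases h2 : R ≠ 2 ∨ B ≠ 2
  · obtain ⟨s, p, hs, hp, hp1, hsd, hu_end⟩ := exists_isIrregularEnd_ne_one h h2
    exact ⟨s, p, 1, 1, hs, hp, by simp, by simp, hp1, hsd, .inl rfl, hu_end,
      isIrregularEnd_one_one h' hR'⟩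
  · obtain ⟨t, q, ht, hq, hq1, htd, hv_end⟩ := exists_isIrregularEnd_ne_one h' (by omega)
    exact ⟨1, 1, q, t, by simp, by simp, hq, ht, hq1.symm, .inl rfl, htd,
      isIrregularEnd_one_one h hR, hv_end⟩

end Multiplicities

section Ear

/-- The graph `H` with an ear attached: a new path `x₀, …, xₙ₋₁`, whose vertex `xᵢ` is `Sum.inr i`,
together with the edges `u x₀` and `xₙ₋₁ v`. -/
def addEar {V : Type*} (H : SimpleGraph V) (u v : V) (n : ℕ) : SimpleGraph (V ⊕ Fin n) where
  Adj
    | .inl x, .inl y => H.Adj x y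
    | .inl x, .inr i => (x = u ∧ i.1 = 0) ∨ (x = v ∧ i.1 + 1 = n)
    | .inr i, .inl x => (x = u ∧ i.1 = 0) ∨ (x = v ∧ i.1 + 1 = n)
    | .inr i, .inr j => i.1 + 1 = j.1 ∨ j.1 + 1 = i.1
  symm := ⟨by
    rintro (x | i) (y | j) h
    exacts [SimpleGraph.Adj.symm h, h, h, h.symm]⟩
  loopless := ⟨by
    rintro (x | i) h
    exacts [H.irrefl h, by omega]⟩

/-- The coloring of `addEar H u v n` that extends the coloring `r` of `H` and has `a i` red copies
of the `i`-th edge of the ear, where edge `0` is `u x₀` and edge `n` is `xₙ₋₁ v`; for `n = 1` these two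
are not told apart. -/
def earColoring {V : Type*} (r : Sym2 V → ℕ) (a : ℕ → ℕ) (n : ℕ) : Sym2 (V ⊕ Fin n) → ℕ :=
  Sym2.lift ⟨fun
    | .inl x, .inl y => r s(x, y)
    | .inl _, .inr i => a (if i.1 = 0 then 0 else n)
    | .inr i, .inl _ => a (if i.1 = 0 then 0 else n)
    | .inr i, .inr j => a (max i.1 j.1), by
      rintro (x | i) (y | j)
      exacts [congrArg r Sym2.eq_swap, rfl, rfl, congrArg a (max_comm _ _)]⟩

variable {V : Type*} {u v : V} {n : ℕ}

section Apply

variable (H : SimpleGraph V) (r : Sym2 V → ℕ) (a : ℕ → ℕ) (x y : V) (i j : Fin n)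

@[simp] lemma addEar_adj_inl_inl : (addEar H u v n).Adj (.inl x) (.inl y) ↔ H.Adj x y := .rfl

@[simp] lemma addEar_adj_inl_inr : (addEar H u v n).Adj (.inl x) (.inr i) ↔
    (x = u ∧ i.1 = 0) ∨ (x = v ∧ i.1 + 1 = n) := .rfl

@[simp] lemma addEar_adj_inr_inl : (addEar H u v n).Adj (.inr i) (.inl x) ↔
    (x = u ∧ i.1 = 0) ∨ (x = v ∧ i.1 + 1 = n) := .rfl

@[simp] lemma addEar_adj_inr_inr : (addEar H u v n).Adj (.inr i) (.inr j) ↔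
    i.1 + 1 = j.1 ∨ j.1 + 1 = i.1 := .rfl

@[simp] lemma earColoring_inl_inl :
    earColoring r a n s(.inl x, .inl y) = r s(x, y) := rfl

@[simp] lemma earColoring_inl_inr :
    earColoring r a n s(.inl x, .inr i) = a (if i.1 = 0 then 0 else n) := rfl

@[simp] lemma earColoring_inr_inl :
    earColoring r a n s(.inr i, .inl x) = a (if i.1 = 0 then 0 else n) := rfl

@[simp] lemma earColoring_inr_inr :
    earColoring r a n s(.inr i, .inr j) = a (max i.1 j.1) := rfl

lemma two_sub_earColoring : (fun e ↦ 2 - earColoring r a n e) =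
    earColoring (fun e ↦ 2 - r e) (fun i ↦ 2 - a i) n := by
  ext e
  induction e with | _ p q
  rcases p with x | i <;> rcases q with y | j <;> rfl

end Apply

lemma sum_ite_consecutive {M : Type*} [AddCommMonoid M] {n : ℕ} (f : ℕ → M) (i : Fin n) :
    (∑ j : Fin n, if i.1 + 1 = j.1 ∨ j.1 + 1 = i.1 then f (max i.1 j.1) else 0) =
      (if i.1 = 0 then 0 else f i) + if i.1 + 1 = n then 0 else f (i + 1) := by
  have h_split (k : ℕ) : (if i.1 + 1 = k ∨ k + 1 = i.1 then f (max i.1 k) else 0) =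
      (if k = i.1 - 1 then if i.1 = 0 then 0 else f i else 0) +
        if k = i.1 + 1 then f (i + 1) else 0 := by
    grind
  rw [Fin.sum_univ_eq_sum_range
    (fun k ↦ if i.1 + 1 = k ∨ k + 1 = i.1 then f (max i.1 k) else 0)]
  simp only [h_split, Finset.sum_add_distrib, Finset.sum_ite_eq', Finset.mem_range]
  grind

lemma fromEdgeSet_eq_addEar (G : SimpleGraph V) (u v : V) {ℓ : ℕ} (hℓ : 2 ≤ ℓ) :
    SimpleGraph.fromEdgeSet
      ((Sym2.map (Sum.inl : V → V ⊕ Fin (ℓ - 1)) '' (G.edgeSet \ {s(u, v)}))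
        ∪ {s(Sum.inl u, (Sum.inr ⟨0, by omega⟩ : V ⊕ Fin (ℓ - 1)))}
        ∪ {e : Sym2 (V ⊕ Fin (ℓ - 1)) | ∃ i : ℕ, ∃ h : i + 1 < ℓ - 1,
            e = s(Sum.inr ⟨i, by omega⟩, Sum.inr ⟨i + 1, h⟩)}
        ∪ {s((Sum.inr ⟨ℓ - 2, by omega⟩ : V ⊕ Fin (ℓ - 1)), Sum.inl v)}) =
      addEar (G.deleteEdges {s(u, v)}) u v (ℓ - 1) := by
  have h_old (p q : V ⊕ Fin (ℓ - 1)) :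
      s(p, q) ∈ Sym2.map Sum.inl '' (G.edgeSet \ {s(u, v)}) ↔
        ∃ x y, p = .inl x ∧ q = .inl y ∧ (G.deleteEdges {s(u, v)}).Adj x y := by
    rw [← SimpleGraph.edgeSet_deleteEdges]
    constructor
    · rintro ⟨e, he, h⟩
      induction e with | _ x y
      rcases Sym2.eq_iff.1 h with ⟨rfl, rfl⟩ | ⟨rfl, rfl⟩
      exacts [⟨x, y, rfl, rfl, he⟩, ⟨y, x, rfl, rfl, SimpleGraph.Adj.symm he⟩]
    · rintro ⟨x, y, rfl, rfl, h⟩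
      exact ⟨s(x, y), h, rfl⟩
  ext p q
  simp only [SimpleGraph.fromEdgeSet_adj, Set.mem_union, Set.mem_singleton_iff,
    Set.mem_ofPred_eq, h_old, Sym2.eq_iff]
  rcases p with x | i <;> rcases q with y | j
  · rw [addEar_adj_inl_inl]
    grind [SimpleGraph.Adj.ne]
  · rw [addEar_adj_inl_inr]
    grind
  · rw [addEar_adj_inr_inl]
    grind
  · rw [addEar_adj_inr_inr]
    grind

lemma earColoring_le_two {H : SimpleGraph V} {r : Sym2 V → ℕ} {a : ℕ → ℕ}
    (hr : ∀ e ∈ H.edgeSet, r e ≤ 2) (ha : ∀ i, a i ≤ 2) :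
    ∀ e ∈ (addEar H u v n).edgeSet, earColoring r a n e ≤ 2 := by
  intro e he
  induction e with | _ p q
  rcases p with x | i <;> rcases q with y | j
  exacts [hr s(x, y) he, ha _, ha _, ha _]

variable [Fintype V] [DecidableEq V] {H : SimpleGraph V} {r : Sym2 V → ℕ} {a : ℕ → ℕ}

section Degrees

variable (H r a)

lemma redDeg_addEar_inl (hn : 2 ≤ n) (x : V) :
    redDeg (addEar H u v n) (earColoring r a n) (.inl x) =
      redDeg H r x + (if x = u then a 0 else 0) + if x = v then a n else 0 := by
  obtain ⟨m, rfl⟩ := Nat.exists_eq_add_of_le' hn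
  have h_first (i : Fin (m + 2)) : i = 0 ↔ i.1 = 0 := Fin.ext_iff
  have h_last (i : Fin (m + 2)) : i = Fin.last (m + 1) ↔ i.1 = m + 1 := Fin.ext_iff
  have h_ear (i : Fin (m + 2)) :
      (if (addEar H u v (m + 2)).Adj (.inl x) (.inr i)
        then earColoring r a (m + 2) s(.inl x, .inr i) else 0) =
      (if i = 0 then if x = u then a 0 else 0 else 0) +
        if i = Fin.last (m + 1) then if x = v then a (m + 2) else 0 else 0 := by
    simp only [addEar_adj_inl_inr, earColoring_inl_inr, h_first, h_last]
    split_ifs <;> grind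
  simp only [redDeg_eq_sum, Fintype.sum_sum_type, h_ear, Finset.sum_add_distrib,
    Finset.sum_ite_eq', Finset.mem_univ, if_true, add_assoc]
  rfl

lemma redDeg_addEar_inr (hn : 2 ≤ n) (i : Fin n) :
    redDeg (addEar H u v n) (earColoring r a n) (.inr i) = a i + a (i + 1) := by
  have h_old (x : V) :
      (if (addEar H u v n).Adj (.inr i) (.inl x) then earColoring r a n s(.inr i, .inl x) else 0) =
      (if x = u then if i.1 = 0 then a i else 0 else 0) +
        if x = v then if i.1 + 1 = n then a (i + 1) else 0 else 0 := by
    simp only [addEar_adj_inr_inl, earColoring_inr_inl]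
    grind
  simp only [redDeg_eq_sum, Fintype.sum_sum_type, h_old, Finset.sum_add_distrib,
    Finset.sum_ite_eq', Finset.mem_univ, if_true, addEar_adj_inr_inr, earColoring_inr_inr,
    sum_ite_consecutive]
  grind

lemma blueDeg_addEar_inl (hn : 2 ≤ n) (x : V) :
    blueDeg (addEar H u v n) (earColoring r a n) (.inl x) =
      blueDeg H r x + (if x = u then 2 - a 0 else 0) + if x = v then 2 - a n else 0 := by
  rw [blueDeg_eq_redDeg_two_sub, two_sub_earColoring, redDeg_addEar_inl _ _ _ hn,
    blueDeg_eq_redDeg_two_sub]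

lemma blueDeg_addEar_inr (hn : 2 ≤ n) (i : Fin n) :
    blueDeg (addEar H u v n) (earColoring r a n) (.inr i) = (2 - a i) + (2 - a (i + 1)) := by
  rw [blueDeg_eq_redDeg_two_sub, two_sub_earColoring, redDeg_addEar_inr _ _ _ hn]

end Degrees

lemma isIrregularAt_addEar_inr_inr (hn : 2 ≤ n) {i j : Fin n} (hij : i.1 + 1 = j.1)
    (ha : ∀ i, a i ≤ 2) (hne : a i ≠ a (i + 1 + 1)) :
    IsIrregularAt (addEar H u v n) (earColoring r a n) (.inr i) (.inr j) := by
  have hi := ha i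
  have hj := ha (i + 1 + 1)
  rw [IsIrregularAt, redDeg_addEar_inr _ _ _ hn, redDeg_addEar_inr _ _ _ hn,
    blueDeg_addEar_inr _ _ _ hn, blueDeg_addEar_inr _ _ _ hn, ← hij]
  constructor <;> intro <;> omega

lemma isIrregularAt_addEar_first (huv : u ≠ v) (hn : 2 ≤ n) {i : Fin n} (hi : i.1 = 0)
    (hend : IsIrregularEnd (redDeg H r u) (blueDeg H r u) (a 0) (a 1)) :
    IsIrregularAt (addEar H u v n) (earColoring r a n) (.inl u) (.inr i) := by
  rw [IsIrregularAt, redDeg_addEar_inl _ _ _ hn, redDeg_addEar_inr _ _ _ hn,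
    blueDeg_addEar_inl _ _ _ hn, blueDeg_addEar_inr _ _ _ hn, earColoring_inl_inr,
    if_pos rfl, if_neg huv, if_pos rfl, if_neg huv, if_pos hi, hi,
    zero_add]
  unfold IsIrregularEnd at hend
  omega

lemma isIrregularAt_addEar_last (huv : u ≠ v) (hn : 2 ≤ n) {i : Fin n} (hi : i.1 + 1 = n)
    (hend : IsIrregularEnd (redDeg H r v) (blueDeg H r v) (a n) (a (n - 1))) :
    IsIrregularAt (addEar H u v n) (earColoring r a n) (.inl v) (.inr i) := by
  have hi' : i.1 = n - 1 := by omega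
  rw [IsIrregularAt, redDeg_addEar_inl _ _ _ hn, redDeg_addEar_inr _ _ _ hn,
    blueDeg_addEar_inl _ _ _ hn, blueDeg_addEar_inr _ _ _ hn, earColoring_inl_inr,
    if_neg huv.symm, if_pos rfl, if_neg huv.symm, if_pos rfl, if_neg (by omega), hi, hi']
  unfold IsIrregularEnd at hend
  omega

lemma isLIR2_addEar (huv : u ≠ v) (hn : 2 ≤ n) (hr : ∀ e ∈ H.edgeSet, r e ≤ 2)
    (ha : ∀ i, a i ≤ 2) (hne : ∀ i, i + 2 ≤ n → a i ≠ a (i + 2))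
    (hu : IsIrregularEnd (redDeg H r u) (blueDeg H r u) (a 0) (a 1))
    (hv : IsIrregularEnd (redDeg H r v) (blueDeg H r v) (a n) (a (n - 1)))
    (hH : ∀ x y, H.Adj x y →
      IsIrregularAt (addEar H u v n) (earColoring r a n) (.inl x) (.inl y)) :
    IsLIR2 (addEar H u v n) (earColoring r a n) := by
  have h_end (x : V) (i : Fin n) (h : (addEar H u v n).Adj (.inl x) (.inr i)) :
      IsIrregularAt (addEar H u v n) (earColoring r a n) (.inl x) (.inr i) := by
    rcases h with ⟨rfl, hi⟩ | ⟨rfl, hi⟩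
    exacts [isIrregularAt_addEar_first huv hn hi hu, isIrregularAt_addEar_last huv hn hi hv]
  refine ⟨earColoring_le_two hr ha, ?_⟩
  rintro (x | i) (y | j) h
  · exact hH x y h
  · exact h_end x j h
  · exact (h_end y i h).symm
  · rcases h with hij | hji
    · exact isIrregularAt_addEar_inr_inr hn hij ha (hne i (by omega))
    · exact (isIrregularAt_addEar_inr_inr hn hji ha (hne j (by omega))).symm

end Ear

section ReplaceEdge

variable {V : Type*} [Fintype V] [DecidableEq V] {G : SimpleGraph V} {u v x y : V}
  {r : Sym2 V → ℕ} {a : ℕ → ℕ} {n : ℕ}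

lemma redDeg_addEar_deleteEdges_inl (hadj : G.Adj u v) (hn : 2 ≤ n)
    (hu : a 0 = r s(u, v) ∨ (G.deleteEdges {s(u, v)}).degree u = 0)
    (hv : a n = r s(u, v) ∨ (G.deleteEdges {s(u, v)}).degree v = 0)
    (hx : (G.deleteEdges {s(u, v)}).degree x ≠ 0) :
    redDeg (addEar (G.deleteEdges {s(u, v)}) u v n) (earColoring r a n) (.inl x) =
      redDeg G r x := by
  have huv := hadj.ne
  rw [redDeg_addEar_inl _ _ _ hn, redDeg_eq_redDeg_deleteEdges_add r x (G.mem_edgeSet.2 hadj)]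
  grind

lemma blueDeg_addEar_deleteEdges_inl (hadj : G.Adj u v) (hn : 2 ≤ n)
    (hu : a 0 = r s(u, v) ∨ (G.deleteEdges {s(u, v)}).degree u = 0)
    (hv : a n = r s(u, v) ∨ (G.deleteEdges {s(u, v)}).degree v = 0)
    (hx : (G.deleteEdges {s(u, v)}).degree x ≠ 0) :
    blueDeg (addEar (G.deleteEdges {s(u, v)}) u v n) (earColoring r a n) (.inl x) =
      blueDeg G r x := by
  rw [blueDeg_eq_redDeg_two_sub, two_sub_earColoring, blueDeg_eq_redDeg_two_sub]
  exact redDeg_addEar_deleteEdges_inl hadj hn (hu.imp_left (congrArg (2 - ·)))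
    (hv.imp_left (congrArg (2 - ·))) hx

lemma isIrregularAt_addEar_deleteEdges (hadj : G.Adj u v) (hn : 2 ≤ n)
    (hu : a 0 = r s(u, v) ∨ (G.deleteEdges {s(u, v)}).degree u = 0)
    (hv : a n = r s(u, v) ∨ (G.deleteEdges {s(u, v)}).degree v = 0)
    (hxy : (G.deleteEdges {s(u, v)}).Adj x y) (h : IsIrregularAt G r x y) :
    IsIrregularAt (addEar (G.deleteEdges {s(u, v)}) u v n) (earColoring r a n)
      (.inl x) (.inl y) := by
  have hx := ((SimpleGraph.degree_pos_iff_exists_adj _ x).2 ⟨y, hxy⟩).ne'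
  have hy := ((SimpleGraph.degree_pos_iff_exists_adj _ y).2 ⟨x, hxy.symm⟩).ne'
  rwa [IsIrregularAt, earColoring_inl_inl, redDeg_addEar_deleteEdges_inl hadj hn hu hv hx,
    redDeg_addEar_deleteEdges_inl hadj hn hu hv hy,
    blueDeg_addEar_deleteEdges_inl hadj hn hu hv hx,
    blueDeg_addEar_deleteEdges_inl hadj hn hu hv hy]

lemma IsLIR2.deg_deleteEdges_ne (hr : IsLIR2 G r) (hadj : G.Adj u v) :
    redDeg (G.deleteEdges {s(u, v)}) r u ≠ redDeg (G.deleteEdges {s(u, v)}) r v ∨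
      blueDeg (G.deleteEdges {s(u, v)}) r u ≠ blueDeg (G.deleteEdges {s(u, v)}) r v := by
  have he : s(u, v) ∈ G.edgeSet := hadj
  have h := hr.2 u v hadj
  simp only [blueDeg_eq_redDeg_two_sub, redDeg_eq_redDeg_deleteEdges_add _ _ he,
    Sym2.mem_iff, true_or, or_true, if_true] at h ⊢
  omega

theorem lir_two_mul_replace_edge_by_path_general (hadj : G.Adj u v) (hlir : LIRtwoLE2 G)
    (hn : 4 ≤ n) : LIRtwoLE2 (addEar (G.deleteEdges {s(u, v)}) u v n) := by
  obtain ⟨r, hr⟩ := hlir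
  obtain ⟨m, rfl⟩ := Nat.exists_eq_add_of_le' hn
  have hrH : ∀ e ∈ (G.deleteEdges {s(u, v)}).edgeSet, r e ≤ 2 := fun e he ↦
    hr.1 e (SimpleGraph.edgeSet_mono (SimpleGraph.deleteEdges_le _) he)
  obtain ⟨s, p, q, t, hs, hp, hq, ht, hpq, hsu, htv, hu, hv⟩ :=
    exists_isIrregularEnd_pair (hr.1 s(u, v) hadj) (redDeg_add_blueDeg u hrH)
      (redDeg_add_blueDeg v hrH) (hr.deg_deleteEdges_ne hadj)
  obtain ⟨a, rfl, rfl, rfl, rfl, ha, hne⟩ := exists_seq_ne_add_two m hs hp hq ht hpq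
  exact ⟨earColoring r a (m + 4), isLIR2_addEar hadj.ne (by omega) hrH ha hne hu hv
    fun x y hxy ↦ isIrregularAt_addEar_deleteEdges hadj (by omega) hsu htv hxy
      (hr.2 x y (SimpleGraph.deleteEdges_le _ hxy))⟩

end ReplaceEdge

/-- Let `G₁` be a simple graph with maximum degree at most 3, let `u` and `v`
be adjacent vertices of `G₁` of degree 3, and suppose `lir(²G₁) ≤ 2`.  Let
`ℓ ≥ 5` and let `G₂` (on the vertex type `V ⊕ Fin (ℓ - 1)`) be obtained from
`G₁` by deleting the edge `uv` and replacing it by the path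
`u, x₀, x₁, …, x_{ℓ-2}, v` of length `ℓ`.  Then `lir(²G₂) ≤ 2`. -/
theorem lir_two_mul_replace_edge_by_path {V : Type*} [Fintype V] [DecidableEq V]
    (G₁ : SimpleGraph V) (u v : V) (hadj : G₁.Adj u v)
    (hsub : ∀ x : V, G₁.degree x ≤ 3)
    (hu : G₁.degree u = 3) (hv : G₁.degree v = 3)
    (hlir : LIRtwoLE2 G₁)
    (ℓ : ℕ) (hℓ : 5 ≤ ℓ) :
    LIRtwoLE2 (SimpleGraph.fromEdgeSet
      ((Sym2.map (Sum.inl : V → V ⊕ Fin (ℓ - 1)) '' (G₁.edgeSet \ {s(u, v)}))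
        ∪ {s(Sum.inl u, (Sum.inr ⟨0, by omega⟩ : V ⊕ Fin (ℓ - 1)))}
        ∪ {e : Sym2 (V ⊕ Fin (ℓ - 1)) | ∃ i : ℕ, ∃ h : i + 1 < ℓ - 1,
            e = s(Sum.inr ⟨i, by omega⟩, Sum.inr ⟨i + 1, h⟩)}
        ∪ {s((Sum.inr ⟨ℓ - 2, by omega⟩ : V ⊕ Fin (ℓ - 1)), Sum.inl v)})) := by
  rw [fromEdgeSet_eq_addEar G₁ u v (by omega)]
  exact lir_two_mul_replace_edge_by_path_general hadj hlir (by omega)
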